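/- Let λ ≥ 0 and define E(μ) := ∫_{ℝ^d} (λ/2)|x|² dμ on the set P₂^a(ℝ^d) of absolutely continuous Borel probability measures on ℝ^d with finite second moment. For τ > 0 set λ_τ := λ/(1+λτ). Then the Moreau–Yosida regularization satisfies E_τ(μ) = (1+λτ)^{−1} E(μ) for all μ ∈ P₂^a(ℝ^d); consequently E_τ is λ_τ-convex along geodesics, and it is not λ'-convex along geodesics for any λ' > λ_τ. -/

import Mathlib

/-!
Write `c = (1 + λτ)⁻¹`. Everything reduces to two pointwise identities in the Euclidean space.

*The regularization.* Completing the square, `|x - y|²/(2τ) + (λ/2)|y|² ≥ c (λ/2)|x|²` for all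
`x, y`, with equality at `y = c x` (`lower_pointwise`); integrating against an optimal plan gives
`E_τ(μ) ≥ c E(μ)`. For the converse, the competitor is the law of `c x + z` with `x ∼ μ` and an
independent `z` uniform on a small ball of radius `ε`: it is absolutely continuous whatever `μ` is,
and since the cross terms in `⟨x, z⟩` cancel exactly (`upper_pointwise`) its energy exceeds
`c E(μ)` by at most a constant times `ε²`. Thus `E_τ = c E` holds for *every* probability measure
with finite second moment (`MYr_eq`). This generality matters: it applies to the interpolants
`((1-α)π₁ + απ₂)#γ` without knowing that they are absolutely continuous.

*Convexity.* The identity `|(1-α)x + αy|² = (1-α)|x|² + α|y|² - α(1-α)|x-y|²`, integrated against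
any optimal plan, gives the `λ_τ`-convexity inequality with *equality* (`MYr_interpolate`). Since
optimal plans exist (`exists_isOptimalPlan`, by Prokhorov's theorem and lower semicontinuity of the
cost), `E_τ` is `λ_τ`-convex. A larger modulus `λ'` contradicts the equality at `α = 1/2` for any
two distinct measures, because their distance is positive (`W2_sq_pos`).
-/

open MeasureTheory Filter ENNReal

noncomputable section

/-- Euclidean space `ℝ^d`. -/
abbrev Euc (d : ℕ) := EuclideanSpace ℝ (Fin d)

/-- The squared 2-Wasserstein distance, as an extended nonnegative real:
the infimum over couplings `γ` (Borel probability measures on `ℝ^d × ℝ^d`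
with first marginal `μ` and second marginal `ν`) of `∫ |x-y|² dγ`. -/
noncomputable def W2sq {d : ℕ} (μ ν : Measure (Euc d)) : ℝ≥0∞ :=
  ⨅ (γ : Measure (Euc d × Euc d)) (_ : γ.map Prod.fst = μ ∧ γ.map Prod.snd = ν),
    ∫⁻ q, ENNReal.ofReal (‖q.1 - q.2‖ ^ 2) ∂γ

/-- The 2-Wasserstein distance (a real number; degenerate when `W2sq = ∞`). -/
noncomputable def W2 {d : ℕ} (μ ν : Measure (Euc d)) : ℝ :=
  Real.sqrt (W2sq μ ν).toReal

/-- `γ` is an optimal transport plan from `μ` to `ν`. -/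
def IsOptimalPlan {d : ℕ} (μ ν : Measure (Euc d)) (γ : Measure (Euc d × Euc d)) : Prop :=
  γ.map Prod.fst = μ ∧ γ.map Prod.snd = ν ∧
    ∫⁻ q, ENNReal.ofReal (‖q.1 - q.2‖ ^ 2) ∂γ = W2sq μ ν

/-- `P₂ᵃ(ℝ^d)`: Borel probability measures with finite second moment, absolutely
continuous with respect to Lebesgue measure. -/
def P2a (d : ℕ) : Set (Measure (Euc d)) :=
  {μ | IsProbabilityMeasure μ ∧ μ ≪ volume ∧ ∫⁻ x, ENNReal.ofReal (‖x‖ ^ 2) ∂μ ≠ ⊤}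

/-- The potential energy `E(μ) = ∫ (λ/2)|x|² dμ`. -/
noncomputable def Epot {d : ℕ} (lam : ℝ) (μ : Measure (Euc d)) : ℝ :=
  ∫ x, lam / 2 * ‖x‖ ^ 2 ∂μ

/-- The second moment `∫ |x|² dμ`. -/
noncomputable def sndMom {d : ℕ} (μ : Measure (Euc d)) : ℝ := ∫ x, ‖x‖ ^ 2 ∂μ

/-- `ν` is a proximal point of `μ` for the (real-valued) functional `F`, with step `τ`,
relative to the class `S`: it minimizes `ρ ↦ W₂²(μ,ρ)/(2τ) + F(ρ)` over `S`. -/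
def IsProximalPt {d : ℕ} (S : Set (Measure (Euc d))) (F : Measure (Euc d) → ℝ) (τ : ℝ)
    (μ ν : Measure (Euc d)) : Prop :=
  ν ∈ S ∧ ∀ ρ ∈ S, (W2 μ ν) ^ 2 / (2 * τ) + F ν ≤ (W2 μ ρ) ^ 2 / (2 * τ) + F ρ

/-- The Moreau–Yosida regularization of a real-valued functional over the class `S`. -/
noncomputable def MYr {d : ℕ} (S : Set (Measure (Euc d))) (F : Measure (Euc d) → ℝ)
    (τ : ℝ) (μ : Measure (Euc d)) : ℝ :=
  sInf {x : ℝ | ∃ ν ∈ S, x = (W2 μ ν) ^ 2 / (2 * τ) + F ν}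

/-- `F` is `λ'`-convex along geodesics on the class `S`: for any `μ₁, μ₂ ∈ S` there is a
geodesic (induced by an optimal plan) from `μ₁` to `μ₂` along which the `λ'`-convexity
inequality holds. -/
def GeoConvexOn {d : ℕ} (S : Set (Measure (Euc d))) (lam' : ℝ)
    (F : Measure (Euc d) → ℝ) : Prop :=
  ∀ μ₁ ∈ S, ∀ μ₂ ∈ S, ∃ γ : Measure (Euc d × Euc d), IsOptimalPlan μ₁ μ₂ γ ∧
    ∀ α ∈ Set.Icc (0:ℝ) 1,
      F (γ.map (fun q => (1 - α) • q.1 + α • q.2)) ≤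
        (1 - α) * F μ₁ + α * F μ₂ - α * (1 - α) * (lam' / 2) * (W2 μ₁ μ₂) ^ 2

/-! ### Existence of optimal plans -/

theorem isProbabilityMeasure_of_map_fst {d : ℕ} {μ : Measure (Euc d)} [IsProbabilityMeasure μ]
    {γ : Measure (Euc d × Euc d)} (h : γ.map Prod.fst = μ) : IsProbabilityMeasure γ := by
  have : IsProbabilityMeasure (γ.map Prod.fst) := by rw [h]; infer_instance
  exact Measure.isProbabilityMeasure_of_map Prod.fst

theorem W2_sq_eq {d : ℕ} (μ ν : Measure (Euc d)) : W2 μ ν ^ 2 = (W2sq μ ν).toReal :=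
  Real.sq_sqrt ENNReal.toReal_nonneg

/-- Translation of the finiteness condition in `P2a` into square integrability of the identity. -/
theorem memLp_two_iff {d : ℕ} {μ : Measure (Euc d)} :
    MemLp (fun x : Euc d => x) 2 μ ↔ ∫⁻ x, ENNReal.ofReal (‖x‖ ^ 2) ∂μ ≠ ⊤ := by
  rw [memLp_two_iff_integrable_sq_norm (by fun_prop), ← lt_top_iff_ne_top,
    ← hasFiniteIntegral_iff_ofReal (ae_of_all _ fun x => by positivity)]
  exact ⟨fun h => h.2, fun h => ⟨by fun_prop, h⟩⟩

/-- The couplings of `μ` and `ν` are weakly compact: they are closed because the marginals are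
weakly continuous, and tight because the marginals are. -/
theorem isCompact_couplings {d : ℕ} (μ ν : Measure (Euc d)) [IsProbabilityMeasure μ]
    [IsProbabilityMeasure ν] :
    IsCompact {γ : ProbabilityMeasure (Euc d × Euc d) |
      (γ : Measure (Euc d × Euc d)).map Prod.fst = μ ∧
      (γ : Measure (Euc d × Euc d)).map Prod.snd = ν} := by
  set S := {γ : ProbabilityMeasure (Euc d × Euc d) |
      (γ : Measure (Euc d × Euc d)).map Prod.fst = μ ∧
      (γ : Measure (Euc d × Euc d)).map Prod.snd = ν} with hS
  have hclosed : IsClosed S := by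
    let μ' : ProbabilityMeasure (Euc d) := ⟨μ, inferInstance⟩
    let ν' : ProbabilityMeasure (Euc d) := ⟨ν, inferInstance⟩
    have h1 := isClosed_eq (ProbabilityMeasure.continuous_map
      (continuous_fst : Continuous (Prod.fst : Euc d × Euc d → Euc d)))
      (continuous_const (y := μ'))
    have h2 := isClosed_eq (ProbabilityMeasure.continuous_map
      (continuous_snd : Continuous (Prod.snd : Euc d × Euc d → Euc d)))
      (continuous_const (y := ν'))
    convert! h1.inter h2 using 1
    ext γ
    exact ⟨fun h => ⟨Subtype.ext h.1, Subtype.ext h.2⟩,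
      fun h => ⟨congrArg Subtype.val h.1, congrArg Subtype.val h.2⟩⟩
  have htight : IsTightMeasureSet {((γ : ProbabilityMeasure (Euc d × Euc d)) :
      Measure (Euc d × Euc d)) | γ ∈ S} := by
    apply IsTightMeasureSet.prodMk
    · refine (isTightMeasureSet_singleton (μ := μ)).subset ?_
      rintro _ ⟨_, ⟨γ, hγ, rfl⟩, rfl⟩
      exact hγ.1
    · refine (isTightMeasureSet_singleton (μ := ν)).subset ?_
      rintro _ ⟨_, ⟨γ, hγ, rfl⟩, rfl⟩
      exact hγ.2
  have := isCompact_closure_of_isTightMeasureSet htight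
  rwa [hclosed.closure_eq] at this

/-- The transport cost is the supremum of the integrals of the bounded continuous truncations
`min n |x - y|²`, each of which is weakly continuous. -/
theorem lowerSemicontinuous_cost (d : ℕ) :
    LowerSemicontinuous fun γ : ProbabilityMeasure (Euc d × Euc d) =>
      ∫⁻ q, ENNReal.ofReal (‖q.1 - q.2‖ ^ 2) ∂(γ : Measure (Euc d × Euc d)) := by
  let f : ℕ → BoundedContinuousFunction (Euc d × Euc d) NNReal := fun n =>
    BoundedContinuousFunction.mkOfBound
      ⟨fun q => min (n : NNReal) (Real.toNNReal (‖q.1 - q.2‖ ^ 2)), by fun_prop⟩ n (by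
        intro x y
        rw [NNReal.dist_eq, abs_le]
        have h1 : ∀ z : NNReal, ((min (n : NNReal) z : NNReal) : ℝ) ≤ n := fun z => by
          exact_mod_cast min_le_left (n : NNReal) z
        have h2 : ∀ z : NNReal, 0 ≤ ((min (n : NNReal) z : NNReal) : ℝ) :=
          fun z => NNReal.coe_nonneg _
        constructor <;> simp only [ContinuousMap.coe_mk] <;>
          linarith [h1 (‖x.1 - x.2‖ ^ 2).toNNReal, h1 (‖y.1 - y.2‖ ^ 2).toNNReal,
            h2 (‖x.1 - x.2‖ ^ 2).toNNReal, h2 (‖y.1 - y.2‖ ^ 2).toNNReal])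
  have key : (fun γ : ProbabilityMeasure (Euc d × Euc d) =>
      ∫⁻ q, ENNReal.ofReal (‖q.1 - q.2‖ ^ 2) ∂(γ : Measure (Euc d × Euc d))) =
      fun γ : ProbabilityMeasure (Euc d × Euc d) => ⨆ n, ∫⁻ q, (f n q : ℝ≥0∞) ∂(γ : Measure (Euc d × Euc d)) := by
    funext γ
    rw [← lintegral_iSup (fun n => by fun_prop)]
    · refine lintegral_congr fun q => ?_
      apply le_antisymm
      · obtain ⟨n, hn⟩ := exists_nat_ge (Real.toNNReal (‖q.1 - q.2‖ ^ 2))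
        refine le_iSup_of_le n ?_
        have : f n q = Real.toNNReal (‖q.1 - q.2‖ ^ 2) := min_eq_right hn
        rw [this]; rfl
      · exact iSup_le fun n => ENNReal.coe_le_coe.2 (min_le_right _ _)
    · intro m n hmn q
      exact ENNReal.coe_le_coe.2 (min_le_min_right _ (by exact_mod_cast hmn))
  rw [key]
  exact lowerSemicontinuous_iSup fun n =>
    (ProbabilityMeasure.continuous_lintegral_boundedContinuousFunction (f n)).lowerSemicontinuous

theorem exists_isOptimalPlan {d : ℕ} (μ ν : Measure (Euc d)) [IsProbabilityMeasure μ]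
    [IsProbabilityMeasure ν] : ∃ γ, IsOptimalPlan μ ν γ := by
  let γ₀ : ProbabilityMeasure (Euc d × Euc d) := ⟨μ.prod ν, inferInstance⟩
  obtain ⟨γ, hγ, hmin⟩ := LowerSemicontinuousOn.exists_isMinOn
    ⟨γ₀, show (μ.prod ν).map Prod.fst = μ ∧ (μ.prod ν).map Prod.snd = ν by simp⟩
    (isCompact_couplings μ ν) ((lowerSemicontinuous_cost d).lowerSemicontinuousOn _)
  refine ⟨γ, hγ.1, hγ.2, le_antisymm ?_ (iInf₂_le (γ : Measure (Euc d × Euc d)) ⟨hγ.1, hγ.2⟩)⟩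
  refine le_iInf₂ fun γ' hγ' => ?_
  have := isProbabilityMeasure_of_map_fst hγ'.1
  exact isMinOn_iff.1 hmin ⟨γ', this⟩ hγ'

/-! ### Wasserstein distance and potential energy as integrals -/

theorem memLp_fst {d : ℕ} {μ : Measure (Euc d)} {γ : Measure (Euc d × Euc d)}
    (h : γ.map Prod.fst = μ) (hμ : MemLp (fun x : Euc d => x) 2 μ) :
    MemLp (fun q : Euc d × Euc d => q.1) 2 γ := by
  subst h
  exact (memLp_map_measure_iff (f := Prod.fst) (by fun_prop) (by fun_prop)).1 hμ

theorem memLp_snd {d : ℕ} {ν : Measure (Euc d)} {γ : Measure (Euc d × Euc d)}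
    (h : γ.map Prod.snd = ν) (hν : MemLp (fun x : Euc d => x) 2 ν) :
    MemLp (fun q : Euc d × Euc d => q.2) 2 γ := by
  subst h
  exact (memLp_map_measure_iff (f := Prod.snd) (by fun_prop) (by fun_prop)).1 hν

theorem W2_sq_of_isOptimalPlan {d : ℕ} {μ ν : Measure (Euc d)} {γ : Measure (Euc d × Euc d)}
    (h : IsOptimalPlan μ ν γ) : W2 μ ν ^ 2 = ∫ q, ‖q.1 - q.2‖ ^ 2 ∂γ := by
  rw [W2_sq_eq, ← h.2.2, integral_eq_lintegral_of_nonneg_ae (ae_of_all _ fun q => by positivity)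
    (by fun_prop)]

theorem W2_sq_le {d : ℕ} {μ ν : Measure (Euc d)} {γ : Measure (Euc d × Euc d)}
    (h₁ : γ.map Prod.fst = μ) (h₂ : γ.map Prod.snd = ν)
    (hi : Integrable (fun q : Euc d × Euc d => ‖q.1 - q.2‖ ^ 2) γ) :
    W2 μ ν ^ 2 ≤ ∫ q, ‖q.1 - q.2‖ ^ 2 ∂γ := by
  rw [W2_sq_eq, integral_eq_lintegral_of_nonneg_ae (ae_of_all _ fun q => by positivity)
    (by fun_prop)]
  refine ENNReal.toReal_mono ?_ (iInf₂_le _ ⟨h₁, h₂⟩)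
  exact ((hasFiniteIntegral_iff_ofReal (ae_of_all _ fun q => by positivity)).1 hi.2).ne

/-- The potential energy of the law of a random vector `X`. -/
theorem Epot_eq_of_map {d : ℕ} {Ω : Type*} [MeasurableSpace Ω] {P : Measure Ω} (lam : ℝ)
    {X : Ω → Euc d} (hX : Measurable X) :
    Epot lam (P.map X) = ∫ ω, lam / 2 * ‖X ω‖ ^ 2 ∂P := by
  rw [Epot, integral_map hX.aemeasurable (by fun_prop)]

/-! ### Pointwise identities -/

/-- Young-type inequality: the difference of the two sides is
`|x - (1 + λτ) y|² / (2τ(1 + λτ))`. -/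
theorem lower_pointwise {d : ℕ} {lam τ : ℝ} (hlam : 0 ≤ lam) (hτ : 0 < τ) (x y : Euc d) :
    (1 + lam * τ)⁻¹ * (lam / 2 * ‖x‖ ^ 2) ≤ ‖x - y‖ ^ 2 / (2 * τ) + lam / 2 * ‖y‖ ^ 2 := by
  have h1 : 0 < 1 + lam * τ := by positivity
  have key : ‖x - y‖ ^ 2 / (2 * τ) + lam / 2 * ‖y‖ ^ 2 - (1 + lam * τ)⁻¹ * (lam / 2 * ‖x‖ ^ 2) =
      ‖x - (1 + lam * τ) • y‖ ^ 2 / (2 * τ * (1 + lam * τ)) := by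
    rw [norm_sub_sq_real, norm_sub_sq_real, norm_smul, inner_smul_right, Real.norm_of_nonneg h1.le]
    field_simp
    ring
  have : 0 ≤ ‖x - (1 + lam * τ) • y‖ ^ 2 / (2 * τ * (1 + lam * τ)) := by positivity
  linarith

/-- At `y = (1 + λτ)⁻¹ x + z`, a perturbation of the pointwise minimizer, the excess is quadratic
in `z`, without a term in `⟨x, z⟩`. -/
theorem upper_pointwise {d : ℕ} {lam τ : ℝ} (hlam : 0 ≤ lam) (hτ : 0 < τ) (x z : Euc d) :
    ‖x - ((1 + lam * τ)⁻¹ • x + z)‖ ^ 2 / (2 * τ) + lam / 2 * ‖(1 + lam * τ)⁻¹ • x + z‖ ^ 2 =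
      (1 + lam * τ)⁻¹ * (lam / 2 * ‖x‖ ^ 2) + (1 / (2 * τ) + lam / 2) * ‖z‖ ^ 2 := by
  have h1 : 0 < 1 + lam * τ := by positivity
  have e : x - ((1 + lam * τ)⁻¹ • x + z) = (1 - (1 + lam * τ)⁻¹) • x - z := by module
  rw [e, norm_sub_sq_real, norm_add_sq_real, norm_smul, norm_smul, inner_smul_left,
    inner_smul_left, mul_pow, mul_pow, Real.norm_eq_abs, Real.norm_eq_abs, sq_abs, sq_abs]
  simp only [conj_trivial]
  field_simp
  ring

theorem convex_pointwise {d : ℕ} (α : ℝ) (x y : Euc d) :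
    ‖(1 - α) • x + α • y‖ ^ 2 =
      (1 - α) * ‖x‖ ^ 2 + α * ‖y‖ ^ 2 - α * (1 - α) * ‖x - y‖ ^ 2 := by
  rw [norm_sub_sq_real, norm_add_sq_real, norm_smul, norm_smul, inner_smul_left,
    inner_smul_right, mul_pow, mul_pow, Real.norm_eq_abs, Real.norm_eq_abs, sq_abs, sq_abs]
  simp only [conj_trivial]
  ring

/-! ### Uniform measures on balls -/

theorem isProbabilityMeasure_cond_ball {d : ℕ} (v : Euc d) {r : ℝ} (hr : 0 < r) :
    IsProbabilityMeasure (ProbabilityTheory.cond volume (Metric.ball v r)) :=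
  ProbabilityTheory.cond_isProbabilityMeasure_of_finite
    (Metric.measure_ball_pos volume v hr).ne' measure_ball_lt_top.ne

theorem memLp_cond_ball {d : ℕ} (v : Euc d) {r : ℝ} (hr : 0 < r) :
    MemLp (fun x : Euc d => x) 2 (ProbabilityTheory.cond volume (Metric.ball v r)) := by
  have := isProbabilityMeasure_cond_ball v hr
  refine MemLp.of_bound (by fun_prop) (‖v‖ + r) ?_
  filter_upwards [ProbabilityTheory.ae_cond_mem (μ := volume) (measurableSet_ball (x := v) (ε := r))]
    with x hx
  have h1 : ‖x - v‖ < r := by simpa [dist_eq_norm] using hx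
  have h2 : ‖x‖ ≤ ‖v‖ + ‖x - v‖ := by simpa using norm_add_le v (x - v)
  linarith

theorem cond_ball_mem_P2a {d : ℕ} (v : Euc d) {r : ℝ} (hr : 0 < r) :
    ProbabilityTheory.cond volume (Metric.ball v r) ∈ P2a d :=
  ⟨isProbabilityMeasure_cond_ball v hr, ProbabilityTheory.cond_absolutelyContinuous,
    memLp_two_iff.1 (memLp_cond_ball v hr)⟩

/-! ### The Moreau–Yosida regularization -/

theorem MYr_set_bddBelow {d : ℕ} {lam τ : ℝ} (hlam : 0 ≤ lam) (hτ : 0 < τ) (μ : Measure (Euc d)) :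
    BddBelow {x : ℝ | ∃ ν ∈ P2a d, x = (W2 μ ν) ^ 2 / (2 * τ) + Epot lam ν} := by
  refine ⟨0, ?_⟩
  rintro _ ⟨ν, -, rfl⟩
  have : 0 ≤ Epot lam ν := integral_nonneg fun x => by positivity
  positivity

theorem le_MYr {d : ℕ} {lam τ : ℝ} (hlam : 0 ≤ lam) (hτ : 0 < τ) {μ : Measure (Euc d)}
    [IsProbabilityMeasure μ] (hμ : MemLp (fun x : Euc d => x) 2 μ) :
    (1 + lam * τ)⁻¹ * Epot lam μ ≤ MYr (P2a d) (Epot lam) τ μ := by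
  refine le_csInf ⟨_, _, cond_ball_mem_P2a 0 one_pos, rfl⟩ ?_
  rintro _ ⟨ν, ⟨hν, -, hν2⟩, rfl⟩
  obtain ⟨γ, hγ⟩ := exists_isOptimalPlan μ ν
  have m1 := memLp_fst hγ.1 hμ
  have m2 := memLp_snd hγ.2.1 (memLp_two_iff.2 hν2)
  have i1 := m1.integrable_norm_pow two_ne_zero
  have i2 := m2.integrable_norm_pow two_ne_zero
  have i3 := (m1.sub m2).integrable_norm_pow two_ne_zero
  simp only [Pi.sub_apply] at i3
  have e1 : Epot lam μ = ∫ q, lam / 2 * ‖q.1‖ ^ 2 ∂γ := by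
    rw [← Epot_eq_of_map lam measurable_fst, hγ.1]
  have e2 : Epot lam ν = ∫ q, lam / 2 * ‖q.2‖ ^ 2 ∂γ := by
    rw [← Epot_eq_of_map lam measurable_snd, hγ.2.1]
  rw [W2_sq_of_isOptimalPlan hγ, e1, e2, ← integral_const_mul, ← integral_div,
    ← integral_add (i3.div_const _) (i2.const_mul _)]
  exact integral_mono ((i1.const_mul _).const_mul _) ((i3.div_const _).add (i2.const_mul _))
    fun q => lower_pointwise hlam hτ q.1 q.2

/-- Upper bound without absolute continuity of `μ`: the competitor is the law of
`(1 + λτ)⁻¹ x + z` with `x ∼ μ` and an independent `z` uniform on a small ball. -/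
theorem MYr_le {d : ℕ} {lam τ : ℝ} (hlam : 0 ≤ lam) (hτ : 0 < τ) {μ : Measure (Euc d)}
    [IsProbabilityMeasure μ] (hμ : MemLp (fun x : Euc d => x) 2 μ) :
    MYr (P2a d) (Epot lam) τ μ ≤ (1 + lam * τ)⁻¹ * Epot lam μ := by
  refine le_of_forall_pos_le_add fun δ hδ => ?_
  set c := (1 + lam * τ)⁻¹ with hc
  set B := 1 / (2 * τ) + lam / 2 with hB
  have hBpos : 0 < B := by positivity
  have hε : 0 < Real.sqrt (δ / B) := Real.sqrt_pos.2 (by positivity)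
  -- The radius is chosen so that the excess energy `B ε²` of the competitor equals `δ`.
  set ε := Real.sqrt (δ / B) with hεd
  have hBε : B * ε ^ 2 = δ := by rw [hεd, Real.sq_sqrt (by positivity)]; field_simp
  set U := ProbabilityTheory.cond volume (Metric.ball (0 : Euc d) ε) with hU
  have hUp : IsProbabilityMeasure U := isProbabilityMeasure_cond_ball 0 hε
  have hU2 : MemLp (fun x : Euc d => x) 2 U := memLp_cond_ball 0 hε
  set Y : Euc d × Euc d → Euc d := fun q => c • q.1 + q.2 with hY
  have hYm : Measurable Y := by fun_prop
  have m1 : MemLp (fun q : Euc d × Euc d => q.1) 2 (μ.prod U) := memLp_fst (by simp) hμ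
  have m2 : MemLp (fun q : Euc d × Euc d => q.2) 2 (μ.prod U) := memLp_snd (by simp) hU2
  have mY : MemLp Y 2 (μ.prod U) := (m1.const_smul c).add m2
  have hac : (μ.prod U).map Y ≪ volume := by
    -- A convolution with an absolutely continuous measure is absolutely continuous.
    have : (μ.prod U).map Y = (μ.map (fun x => c • x)).conv U := by
      have := Measure.isProbabilityMeasure_map (μ := μ) (f := fun x : Euc d => c • x) (by fun_prop)
      have e : (μ.map (fun x => c • x)).prod U = (μ.prod U).map (Prod.map (fun x => c • x) id) := by
        rw [← Measure.map_prod_map _ _ (by fun_prop) (by fun_prop), Measure.map_id]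
      rw [Measure.conv, e, Measure.map_map (by fun_prop) (by fun_prop)]
      rfl
    rw [this]
    exact Measure.conv_absolutelyContinuous ProbabilityTheory.cond_absolutelyContinuous
  have hmem : (μ.prod U).map Y ∈ P2a d :=
    ⟨Measure.isProbabilityMeasure_map hYm.aemeasurable, hac,
      memLp_two_iff.1 ((memLp_map_measure_iff (by fun_prop) hYm.aemeasurable).2 mY)⟩
  have hT : Measurable (fun q : Euc d × Euc d => (q.1, Y q)) := by fun_prop
  have iD := (m1.sub mY).integrable_norm_pow two_ne_zero
  simp only [Pi.sub_apply] at iD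
  have iY := mY.integrable_norm_pow two_ne_zero
  have i1 := m1.integrable_norm_pow two_ne_zero
  have i2 := m2.integrable_norm_pow two_ne_zero
  have hW : W2 μ ((μ.prod U).map Y) ^ 2 ≤ ∫ q, ‖q.1 - Y q‖ ^ 2 ∂(μ.prod U) := by
    have := W2_sq_le (μ := μ) (ν := (μ.prod U).map Y)
      (γ := (μ.prod U).map (fun q : Euc d × Euc d => (q.1, Y q)))
      (by rw [Measure.map_map (by fun_prop) hT]
          exact Measure.map_fst_prod.trans (by simp))
      (by rw [Measure.map_map (by fun_prop) hT]; rfl)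
      ((integrable_map_measure (by fun_prop) hT.aemeasurable).2 iD)
    rwa [integral_map hT.aemeasurable (by fun_prop)] at this
  have hz : ∫ q, ‖q.2‖ ^ 2 ∂(μ.prod U) ≤ ε ^ 2 := by
    have hb : ∀ᵐ x ∂((μ.prod U).map Prod.snd), ‖x‖ < ε := by
      have : (μ.prod U).map Prod.snd = U := by simp
      rw [this]
      filter_upwards [ProbabilityTheory.ae_cond_mem (μ := volume)
        (measurableSet_ball (x := (0 : Euc d)) (ε := ε))] with x hx
      simpa using hx
    have hb' := ae_of_ae_map measurable_snd.aemeasurable hb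
    calc ∫ q, ‖q.2‖ ^ 2 ∂(μ.prod U) ≤ ∫ q, ε ^ 2 ∂(μ.prod U) := by
          refine integral_mono_ae i2 (integrable_const _) ?_
          filter_upwards [hb'] with q hq
          exact pow_le_pow_left₀ (norm_nonneg _) hq.le 2
      _ = ε ^ 2 := by simp
  have e1 : Epot lam μ = ∫ q, lam / 2 * ‖q.1‖ ^ 2 ∂(μ.prod U) := by
    rw [← Epot_eq_of_map lam measurable_fst]
    simp
  calc MYr (P2a d) (Epot lam) τ μ
      ≤ W2 μ ((μ.prod U).map Y) ^ 2 / (2 * τ) + Epot lam ((μ.prod U).map Y) :=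
        csInf_le (MYr_set_bddBelow hlam hτ μ) ⟨_, hmem, rfl⟩
    _ ≤ (∫ q, ‖q.1 - Y q‖ ^ 2 ∂(μ.prod U)) / (2 * τ) + ∫ q, lam / 2 * ‖Y q‖ ^ 2 ∂(μ.prod U) := by
        rw [Epot_eq_of_map lam hYm]; gcongr
    _ = ∫ q, (c * (lam / 2 * ‖q.1‖ ^ 2) + B * ‖q.2‖ ^ 2) ∂(μ.prod U) := by
        rw [← integral_div, ← integral_add (iD.div_const _) (iY.const_mul _)]
        exact integral_congr_ae (ae_of_all _ fun q => upper_pointwise hlam hτ q.1 q.2)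
    _ = c * Epot lam μ + B * ∫ q, ‖q.2‖ ^ 2 ∂(μ.prod U) := by
        rw [integral_add ((i1.const_mul _).const_mul _) (i2.const_mul _), integral_const_mul,
          integral_const_mul B, e1]
    _ ≤ c * Epot lam μ + δ := by rw [← hBε]; gcongr

/-- The formula `E_τ = (1 + λτ)⁻¹ E`, for all probability measures with finite second moment; the
infimum defining `E_τ` still runs over absolutely continuous measures only. -/
theorem MYr_eq {d : ℕ} {lam τ : ℝ} (hlam : 0 ≤ lam) (hτ : 0 < τ) {μ : Measure (Euc d)}
    [IsProbabilityMeasure μ] (hμ : MemLp (fun x : Euc d => x) 2 μ) :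
    MYr (P2a d) (Epot lam) τ μ = (1 + lam * τ)⁻¹ * Epot lam μ :=
  (MYr_le hlam hτ hμ).antisymm (le_MYr hlam hτ hμ)

/-! ### Interpolation and sharpness -/

/-- Along the geodesic of any optimal plan the `λ_τ`-convexity inequality for `E_τ` is an equality. -/
theorem MYr_interpolate {d : ℕ} {lam τ : ℝ} (hlam : 0 ≤ lam) (hτ : 0 < τ)
    {μ₁ μ₂ : Measure (Euc d)} (h₁ : μ₁ ∈ P2a d) (h₂ : μ₂ ∈ P2a d)
    {γ : Measure (Euc d × Euc d)} (hγ : IsOptimalPlan μ₁ μ₂ γ) (α : ℝ) :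
    MYr (P2a d) (Epot lam) τ (γ.map (fun q => (1 - α) • q.1 + α • q.2)) =
      (1 - α) * MYr (P2a d) (Epot lam) τ μ₁ + α * MYr (P2a d) (Epot lam) τ μ₂ -
        α * (1 - α) * (lam / (1 + lam * τ) / 2) * W2 μ₁ μ₂ ^ 2 := by
  obtain ⟨hp1, -, hs1⟩ := h₁
  obtain ⟨hp2, -, hs2⟩ := h₂
  have hγp := isProbabilityMeasure_of_map_fst hγ.1
  have n1 := memLp_two_iff.2 hs1
  have n2 := memLp_two_iff.2 hs2
  have m1 := memLp_fst hγ.1 n1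
  have m2 := memLp_snd hγ.2.1 n2
  set Z : Euc d × Euc d → Euc d := fun q => (1 - α) • q.1 + α • q.2 with hZ
  have hZm : Measurable Z := by fun_prop
  have mZ : MemLp Z 2 γ := (m1.const_smul (1 - α)).add (m2.const_smul α)
  have hZp : IsProbabilityMeasure (γ.map Z) := Measure.isProbabilityMeasure_map hZm.aemeasurable
  have i1 := m1.integrable_norm_pow two_ne_zero
  have i2 := m2.integrable_norm_pow two_ne_zero
  have iD := (m1.sub m2).integrable_norm_pow two_ne_zero
  simp only [Pi.sub_apply] at iD
  rw [MYr_eq hlam hτ n1, MYr_eq hlam hτ n2,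
    MYr_eq hlam hτ ((memLp_map_measure_iff (by fun_prop) hZm.aemeasurable).2 mZ),
    W2_sq_of_isOptimalPlan hγ, Epot_eq_of_map lam hZm]
  have e1 : Epot lam μ₁ = lam / 2 * ∫ q, ‖q.1‖ ^ 2 ∂γ := by
    rw [← integral_const_mul, ← Epot_eq_of_map lam measurable_fst, hγ.1]
  have e2 : Epot lam μ₂ = lam / 2 * ∫ q, ‖q.2‖ ^ 2 ∂γ := by
    rw [← integral_const_mul, ← Epot_eq_of_map lam measurable_snd, hγ.2.1]
  have e3 : ∫ q, ‖Z q‖ ^ 2 ∂γ = (1 - α) * ∫ q, ‖q.1‖ ^ 2 ∂γ + α * ∫ q, ‖q.2‖ ^ 2 ∂γ -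
      α * (1 - α) * ∫ q, ‖q.1 - q.2‖ ^ 2 ∂γ := by
    rw [← integral_const_mul, ← integral_const_mul, ← integral_const_mul,
      ← integral_add (i1.const_mul _) (i2.const_mul _),
      ← integral_sub (by exact (i1.const_mul _).add (i2.const_mul _)) (iD.const_mul _)]
    exact integral_congr_ae (ae_of_all _ fun q => convex_pointwise α q.1 q.2)
  rw [e1, e2, integral_const_mul, e3]
  ring

theorem W2_sq_pos {d : ℕ} {μ ν : Measure (Euc d)} (hμ : μ ∈ P2a d) (hν : ν ∈ P2a d)
    (hne : μ ≠ ν) : 0 < W2 μ ν ^ 2 := by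
  obtain ⟨hp1, -, hs1⟩ := hμ
  obtain ⟨hp2, -, hs2⟩ := hν
  obtain ⟨γ, hγ⟩ := exists_isOptimalPlan μ ν
  have m1 := memLp_fst hγ.1 (memLp_two_iff.2 hs1)
  have m2 := memLp_snd hγ.2.1 (memLp_two_iff.2 hs2)
  have iD := (m1.sub m2).integrable_norm_pow two_ne_zero
  simp only [Pi.sub_apply] at iD
  refine (sq_nonneg _).lt_of_ne fun h0 => hne ?_
  rw [W2_sq_of_isOptimalPlan hγ, eq_comm,
    integral_eq_zero_iff_of_nonneg (fun q => by positivity) iD] at h0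
  rw [← hγ.1, ← hγ.2.1]
  refine Measure.map_congr ?_
  filter_upwards [h0] with q hq
  have : ‖q.1 - q.2‖ = 0 := by simpa using hq
  exact sub_eq_zero.1 (norm_eq_zero.1 this)

theorem exists_ne_mem_P2a {d : ℕ} (hd : 0 < d) : ∃ μ ∈ P2a d, ∃ ν ∈ P2a d, μ ≠ ν := by
  let v : Euc d := EuclideanSpace.single ⟨0, hd⟩ 2
  refine ⟨_, cond_ball_mem_P2a 0 one_pos, _, cond_ball_mem_P2a v one_pos, fun h => ?_⟩
  have hdisj : Disjoint (Metric.ball v 1) (Metric.ball (0 : Euc d) 1) :=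
    Metric.ball_disjoint_ball (by simp [v]; norm_num)
  have h1 : ProbabilityTheory.cond volume (Metric.ball (0 : Euc d) 1) (Metric.ball 0 1) = 1 :=
    ProbabilityTheory.cond_apply_self (Metric.measure_ball_pos volume _ one_pos).ne'
      measure_ball_lt_top.ne
  have h2 : ProbabilityTheory.cond volume (Metric.ball v 1) (Metric.ball (0 : Euc d) 1) = 0 := by
    rw [ProbabilityTheory.cond_apply measurableSet_ball, hdisj.inter_eq]
    simp
  rw [h, h2] at h1
  exact zero_ne_one h1

/-- **Sharpness of the generalized convexity of `E_τ`** (Proposition 4.1). For the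
quadratic potential `E(μ) = ∫ (λ/2)|x|² dμ` with `λ ≥ 0` and `τ > 0`, the Moreau–Yosida
regularization satisfies `E_τ = (1+λτ)⁻¹ E`; consequently `E_τ` is `λ_τ`-convex along
geodesics with `λ_τ = λ/(1+λτ)`, and is not `λ'`-convex along geodesics for any
`λ' > λ_τ`. -/
theorem potential_moreauYosida_sharp
    {d : ℕ} (hd : 0 < d) (lam τ : ℝ) (hlam : 0 ≤ lam) (hτ : 0 < τ) :
    (∀ μ ∈ P2a d, MYr (P2a d) (Epot lam) τ μ = (1 + lam * τ)⁻¹ * Epot lam μ) ∧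
    GeoConvexOn (P2a d) (lam / (1 + lam * τ)) (MYr (P2a d) (Epot lam) τ) ∧
    ∀ lam' : ℝ, lam / (1 + lam * τ) < lam' →
      ¬ GeoConvexOn (P2a d) lam' (MYr (P2a d) (Epot lam) τ) := by
  refine ⟨fun μ hμ => ?_, fun μ₁ h₁ μ₂ h₂ => ?_, fun lam' hlt hconv => ?_⟩
  · obtain ⟨hp, -, hs⟩ := hμ
    exact MYr_eq hlam hτ (memLp_two_iff.2 hs)
  · have := h₁.1
    have := h₂.1
    obtain ⟨γ, hγ⟩ := exists_isOptimalPlan μ₁ μ₂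
    exact ⟨γ, hγ, fun α _ => (MYr_interpolate hlam hτ h₁ h₂ hγ α).le⟩
  · obtain ⟨μ, hμ, ν, hν, hne⟩ := exists_ne_mem_P2a hd
    obtain ⟨γ, hγ, hle⟩ := hconv μ hμ ν hν
    have h := hle (1 / 2) (by norm_num)
    rw [MYr_interpolate hlam hτ hμ hν hγ] at h
    nlinarith [mul_pos (sub_pos.2 hlt) (W2_sq_pos hμ hν hne)]
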